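/- Let m ≥ 2 be even, σ₀ = (−1)^{m/2}, L, T, τ > 0, and let f : ℝ → ℝ be C² with ‖f″‖_∞ := sup_ℝ |f″| < ∞. Let q = (q₀, …, q_{m−1}) be a C¹ solution, L-periodic in x, of ∂_t q₀ + ∂_x f(q₀) + σ₀ ∂_x q_{m−1} = 0, τ ∂_t q_j + σ₀ (−1)^j ∂_x q_{m−j−1} = σ₀ (−1)^j q_{m−j} for j ∈ {1, …, m/2 − 1}, and τ ∂_t q_j + σ₀ (−1)^{j+m−1} ∂_x q_{m−j−1} = σ₀ (−1)^{j+m−1} q_{m−j} for j ∈ {m/2, …, m−1}. Let q̄ = (q̄₀, …, q̄_{m−1}) be a C¹ tuple, L-periodic in x with ∂_x q̄₀ bounded, satisfying the same system except that the first equation carries a residual: ∂_t q̄₀ + ∂_x f(q̄₀) + σ₀ ∂_x q̄_{m−1} = τ R for some continuous R. Then the relative energy η(q, q̄)(t) = ∫₀^L ( ½ (q₀−q̄₀)² + (τ/2) Σ_{j=1}^{m−1} (q_j−q̄_j)² ) dx satisfies, for all t ∈ [0,T], d/dt η(q, q̄)(t) + ∫₀^L (q_{m/2}(t,x) − q̄_{m/2}(t,x))²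 dx ≤ ( ‖f″‖_∞ · sup |∂_x q̄₀| + 1 ) η(q, q̄)(t) + τ² ∫₀^L R(t,x)² dx. -/

import Mathlib

open MeasureTheory

/-- Partial derivative with respect to the first (time) variable. -/
noncomputable def pdt (u : ℝ → ℝ → ℝ) : ℝ → ℝ → ℝ :=
  fun t x => deriv (fun s => u s x) t

/-- Partial derivative with respect to the second (space) variable. -/
noncomputable def pdx (u : ℝ → ℝ → ℝ) : ℝ → ℝ → ℝ :=
  fun t x => deriv (fun y => u t y) x

/-- The slices of a `C¹` function of two variables are differentiable in time. -/
theorem hasDerivAt_pdt {u : ℝ → ℝ → ℝ} (hu : ContDiff ℝ 1 (Function.uncurry u)) (t x : ℝ) :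
    HasDerivAt (fun s => u s x) (pdt u t x) t := by
  have h : ContDiff ℝ 1 (fun s => Function.uncurry u (s, x)) := by fun_prop
  exact (h.differentiable one_ne_zero t).hasDerivAt

/-- The slices of a `C¹` function of two variables are differentiable in space. -/
theorem hasDerivAt_pdx {u : ℝ → ℝ → ℝ} (hu : ContDiff ℝ 1 (Function.uncurry u)) (t x : ℝ) :
    HasDerivAt (fun y => u t y) (pdx u t x) x := by
  have h : ContDiff ℝ 1 (fun y => Function.uncurry u (t, y)) := by fun_prop
  exact (h.differentiable one_ne_zero x).hasDerivAt

theorem continuous_pdx_slice {u : ℝ → ℝ → ℝ} (hu : ContDiff ℝ 1 (Function.uncurry u)) (t : ℝ) :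
    Continuous (pdx u t) := by
  have h : ContDiff ℝ 1 (fun y => Function.uncurry u (t, y)) := by fun_prop
  exact h.continuous_deriv le_rfl

theorem continuous_pdt {u : ℝ → ℝ → ℝ} (hu : ContDiff ℝ 1 (Function.uncurry u)) :
    Continuous (Function.uncurry (pdt u)) := by
  have h : Function.uncurry (pdt u) = fun p => fderiv ℝ (Function.uncurry u) p (1, 0) := by
    funext ⟨t, x⟩
    have hu' := (hu.differentiable one_ne_zero (t, x)).hasFDerivAt
    have hs : HasDerivAt (fun s : ℝ => (s, x)) (1, 0) t :=
      (hasDerivAt_id t).prodMk (hasDerivAt_const t x)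
    exact (hu'.comp_hasDerivAt t hs).deriv
  rw [h]
  exact (hu.continuous_fderiv one_ne_zero).clm_apply continuous_const

/-- Differentiation under the integral sign for a `C¹` integrand on a compact interval. -/
theorem hasDerivAt_intervalIntegral_of_contDiff {u : ℝ → ℝ → ℝ}
    (hu : ContDiff ℝ 1 (Function.uncurry u)) (a b t : ℝ) :
    HasDerivAt (fun s => ∫ x in a..b, u s x) (∫ x in a..b, pdt u t x) t := by
  have hslice : ∀ s, Continuous (u s) := fun s =>
    hu.continuous.comp (by fun_prop : Continuous fun x : ℝ => (s, x))
  have hslice' : Continuous (pdt u t) :=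
    (continuous_pdt hu).comp (by fun_prop : Continuous fun x : ℝ => (t, x))
  obtain ⟨C, hC⟩ := ((isCompact_closedBall t 1).prod
    (isCompact_uIcc (a := a) (b := b))).exists_bound_of_continuousOn
      (continuous_pdt hu).continuousOn
  refine (intervalIntegral.hasDerivAt_integral_of_dominated_loc_of_deriv_le
    (F' := pdt u) (bound := fun _ => C) (Metric.closedBall_mem_nhds t one_pos)
    (Filter.Eventually.of_forall fun s => (hslice s).aestronglyMeasurable)
    ((hslice t).intervalIntegrable a b) hslice'.aestronglyMeasurable
    (Filter.Eventually.of_forall fun x hx s hs => hC (s, x) ⟨hs, Set.uIoc_subset_uIcc hx⟩)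
    intervalIntegrable_const
    (Filter.Eventually.of_forall fun x _ s _ => hasDerivAt_pdt hu s x)).2

/-- Second-order Taylor bound for a `C²` function with bounded second derivative. -/
theorem abs_sub_sub_deriv_mul_le {f : ℝ → ℝ} (hf : ContDiff ℝ 2 f) {M : ℝ}
    (hM : ∀ x, |deriv (deriv f) x| ≤ M) (a b : ℝ) :
    |f b - f a - deriv f a * (b - a)| ≤ M * ((b - a) ^ 2 / 2) := by
  rcases eq_or_ne a b with rfl | hab
  · simp
  obtain ⟨c, -, hc⟩ := taylor_mean_remainder_lagrange_iteratedDeriv (n := 1) hab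
    (hf.contDiffOn.of_le (by norm_num))
  have hd : derivWithin f (Set.uIcc a b) a = deriv f a :=
    (hf.differentiable two_ne_zero a).derivWithin (uniqueDiffOn_uIcc hab a Set.left_mem_uIcc)
  have h2 : iteratedDeriv (1 + 1) f c = deriv (deriv f) c := by
    rw [iteratedDeriv_succ, iteratedDeriv_one]
  rw [h2, taylorWithinEval_succ, taylor_within_zero_eval, iteratedDerivWithin_one, hd] at hc
  have he : f b - f a - deriv f a * (b - a) = deriv (deriv f) c * ((b - a) ^ 2 / 2) := by
    norm_num at hc
    linarith
  rw [he, abs_mul, abs_of_nonneg (by positivity : (0 : ℝ) ≤ (b - a) ^ 2 / 2)]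
  exact mul_le_mul_of_nonneg_right (hM c) (by positivity)

/-- Pairing the terms of a sum over `{0, …, n - 1}` and `{n, …, 2n - 1}` by reflection. -/
theorem sum_range_two_mul_reflect (g : ℕ → ℝ) (n : ℕ) :
    ∑ j ∈ Finset.range (2 * n), g j
      = ∑ j ∈ Finset.range n, (g j + g (2 * n - 1 - j)) := by
  rw [two_mul, Finset.sum_range_add, Finset.sum_add_distrib,
    ← Finset.sum_range_reflect (fun j => g (n + j))]
  congr 1
  refine Finset.sum_congr rfl fun j hj => ?_
  have := Finset.mem_range.1 hj
  congr 1
  omega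

/-- The skew-symmetric structure of the even-order system: the relaxation terms leave only the
dissipation of the middle component, and the transport terms form a total derivative. -/
theorem sum_mul_relaxation_eq (n : ℕ) (hn : 1 ≤ n) (w wx g : ℕ → ℝ)
    (hlow : ∀ j, 1 ≤ j → j < n →
      g j = (-1 : ℝ) ^ n * (-1) ^ j * (w (2 * n - j) - wx (2 * n - 1 - j)))
    (hhigh : ∀ j, n ≤ j → j < 2 * n →
      g j = -((-1 : ℝ) ^ n * (-1) ^ j * (w (2 * n - j) - wx (2 * n - 1 - j)))) :
    ∑ j ∈ Finset.Icc 1 (2 * n - 1), w j * g j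
      = -(w n) ^ 2 + (-1 : ℝ) ^ n * (w 0 * wx (2 * n - 1))
        - ∑ j ∈ Finset.range n, (-1 : ℝ) ^ n * (-1) ^ j *
            (w j * wx (2 * n - 1 - j) + wx j * w (2 * n - 1 - j)) := by
  obtain ⟨k, rfl⟩ : ∃ k, n = k + 1 := ⟨n - 1, by omega⟩
  set ε : ℕ → ℝ := fun j => (-1 : ℝ) ^ (k + 1) * (-1) ^ j * if j < k + 1 then 1 else -1 with hε
  have hg : ∀ j, 1 ≤ j → j < 2 * (k + 1) →
      g j = ε j * (w (2 * (k + 1) - j) - wx (2 * (k + 1) - 1 - j)) := by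
    intro j h1 h2
    by_cases h : j < k + 1
    · rw [hlow j h1 h]; simp only [hε, if_pos h]; ring
    · rw [hhigh j (by omega) h2]; simp only [hε, if_neg h]; ring
  have hIcc : ∀ F : ℕ → ℝ, ∑ j ∈ Finset.Icc 1 (2 * (k + 1) - 1), F j
      = ∑ j ∈ Finset.range (2 * k + 1), F (j + 1) := by
    intro F
    rw [Finset.range_eq_Ico, Finset.sum_Ico_add' F 0 (2 * k + 1) 1]
    rfl
  have hsource : ∑ j ∈ Finset.range (2 * k + 1), ε (j + 1) * (w (j + 1) * w (2 * k + 1 - j))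
      = -(w (k + 1)) ^ 2 := by
    rw [show 2 * k + 1 = k + (1 + k) by ring, Finset.sum_range_add, Finset.sum_range_add,
      ← Finset.sum_range_reflect, Finset.sum_range_one]
    have hmid : ε (k + 0 + 1) * (w (k + 0 + 1) * w (k + (1 + k) - (k + 0)))
        = -(w (k + 1)) ^ 2 := by
      have h1 : k + (1 + k) - (k + 0) = k + 1 := by omega
      have h2 : (-1 : ℝ) ^ (k + 1) * (-1) ^ (k + 1) = 1 := by
        rw [← mul_pow]; simp
      rw [h1]
      simp only [add_zero, hε, lt_irrefl, if_false, h2]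
      ring
    rw [hmid]
    have hcancel : ∑ j ∈ Finset.range k,
        (ε (k - 1 - j + 1) * (w (k - 1 - j + 1) * w (k + (1 + k) - (k - 1 - j)))
          + ε (k + (1 + j) + 1) * (w (k + (1 + j) + 1) * w (k + (1 + k) - (k + (1 + j))))) = 0 := by
      refine Finset.sum_eq_zero fun j hj => ?_
      have hj' := Finset.mem_range.1 hj
      obtain ⟨i, rfl⟩ : ∃ i, k = j + 1 + i := ⟨k - (j + 1), by omega⟩
      have e1 : j + 1 + i - 1 - j + 1 = i + 1 := by omega
      have e2 : j + 1 + i + (1 + (j + 1 + i)) - (j + 1 + i - 1 - j) = i + 1 + 2 * (j + 1) := by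
        omega
      have e3 : j + 1 + i + (1 + j) + 1 = i + 1 + 2 * (j + 1) := by omega
      have e4 : j + 1 + i + (1 + (j + 1 + i)) - (j + 1 + i + (1 + j)) = i + 1 := by omega
      have hsgn : (-1 : ℝ) ^ (i + 1 + 2 * (j + 1)) = (-1) ^ (i + 1) := by
        rw [pow_add, pow_mul]; simp
      have c1 : i + 1 < j + 1 + i + 1 := by omega
      have c2 : ¬ i + 1 + 2 * (j + 1) < j + 1 + i + 1 := by omega
      simp only [e1, e2, e3, e4, hε, hsgn, if_pos c1, if_neg c2]
      ring
    rw [Finset.sum_add_distrib] at hcancel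
    linarith
  have htransport : ∑ j ∈ Finset.range (2 * (k + 1)), ε j * (w j * wx (2 * (k + 1) - 1 - j))
      = ∑ j ∈ Finset.range (k + 1), (-1 : ℝ) ^ (k + 1) * (-1) ^ j *
            (w j * wx (2 * (k + 1) - 1 - j) + wx j * w (2 * (k + 1) - 1 - j)) := by
    rw [sum_range_two_mul_reflect]
    refine Finset.sum_congr rfl fun j hj => ?_
    have hj' := Finset.mem_range.1 hj
    have e1 : 2 * (k + 1) - 1 - (2 * (k + 1) - 1 - j) = j := by omega
    have c2 : ¬ 2 * (k + 1) - 1 - j < k + 1 := by omega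
    have hsgn : (-1 : ℝ) ^ (2 * (k + 1) - 1 - j) = -(-1) ^ j := by
      obtain ⟨i, hi⟩ : ∃ i, k = j + i := ⟨k - j, by omega⟩
      have : 2 * (k + 1) - 1 - j = j + 2 * i + 1 := by omega
      rw [this, pow_succ, pow_add, pow_mul]; simp
    simp only [e1, hε, hsgn, if_pos hj', if_neg c2]
    ring
  have hsplit : ∑ j ∈ Finset.Icc 1 (2 * (k + 1) - 1), w j * g j
      = ∑ j ∈ Finset.range (2 * k + 1), ε (j + 1) * (w (j + 1) * w (2 * k + 1 - j))
        - ∑ j ∈ Finset.range (2 * k + 1),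
            ε (j + 1) * (w (j + 1) * wx (2 * (k + 1) - 1 - (j + 1))) := by
    rw [hIcc, ← Finset.sum_sub_distrib]
    refine Finset.sum_congr rfl fun j hj => ?_
    have hj' := Finset.mem_range.1 hj
    have e1 : 2 * (k + 1) - (j + 1) = 2 * k + 1 - j := by omega
    rw [hg (j + 1) (by omega) (by omega), e1]
    ring
  rw [show 2 * (k + 1) = 2 * k + 1 + 1 by ring, Finset.sum_range_succ'] at htransport
  have hε0 : ε 0 = (-1 : ℝ) ^ (k + 1) := by simp [hε]
  rw [hsplit, hsource]
  simp only [hε0, Nat.sub_zero] at htransport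
  rw [show 2 * (k + 1) = 2 * k + 1 + 1 by ring]
  linarith

/-- The integral over a period of the derivative of a periodic `C¹` function vanishes. -/
theorem integral_eq_zero_of_hasDerivAt_periodic {Φ Φ' : ℝ → ℝ} {L : ℝ}
    (hΦ : ∀ x, HasDerivAt Φ (Φ' x) x) (hΦ' : Continuous Φ') (hper : Function.Periodic Φ L) :
    ∫ x in (0 : ℝ)..L, Φ' x = 0 := by
  rw [intervalIntegral.integral_eq_sub_of_hasDerivAt (fun x _ => hΦ x)
    (hΦ'.intervalIntegrable 0 L), hper.eq, sub_self]

/-- Relative energy inequality for the generalized even-order hyperbolic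
approximation of `∂_t u + ∂_x f(u) + σ₀ ∂_x^m u = 0` with `σ₀ = (-1)^(m/2)`:
if `q` solves the system and `q̄` solves it with a residual `τ R` in the first
equation, then
`d/dt η(q, q̄) + ∫₀^L (q_{m/2} - q̄_{m/2})² dx
  ≤ (‖f″‖_∞ · sup|∂_x q̄₀| + 1) η(q, q̄) + τ² ∫₀^L R² dx`. -/
theorem even_order_relative_energy_inequality
    (m : ℕ) (hm : Even m) (hm2 : 2 ≤ m)
    (σ₀ : ℝ) (hσ : σ₀ = (-1 : ℝ) ^ (m / 2))
    (L T τ : ℝ) (hL : 0 < L) (hT : 0 < T) (hτ : 0 < τ)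
    (f : ℝ → ℝ) (hf : ContDiff ℝ 2 f)
    (Mf : ℝ) (hMf : ∀ x : ℝ, |deriv (deriv f) x| ≤ Mf)
    (q qb : ℕ → ℝ → ℝ → ℝ) (R : ℝ → ℝ → ℝ)
    (hq : ∀ j < m, ContDiff ℝ 1 (Function.uncurry (q j)))
    (hqb : ∀ j < m, ContDiff ℝ 1 (Function.uncurry (qb j)))
    (hR : Continuous (Function.uncurry R))
    (hper : ∀ j < m, ∀ t, Function.Periodic (q j t) L)
    (hperb : ∀ j < m, ∀ t, Function.Periodic (qb j t) L)
    (B : ℝ) (hB : ∀ t x : ℝ, |pdx (qb 0) t x| ≤ B)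
    (heq₀ : ∀ t ∈ Set.Icc (0:ℝ) T, ∀ x : ℝ,
      pdt (q 0) t x + pdx (fun s y => f (q 0 s y)) t x
        + σ₀ * pdx (q (m - 1)) t x = 0)
    (heqlow : ∀ j ∈ Finset.Icc 1 (m / 2 - 1), ∀ t ∈ Set.Icc (0:ℝ) T, ∀ x : ℝ,
      τ * pdt (q j) t x + σ₀ * (-1 : ℝ) ^ j * pdx (q (m - j - 1)) t x
        = σ₀ * (-1 : ℝ) ^ j * q (m - j) t x)
    (heqhigh : ∀ j ∈ Finset.Icc (m / 2) (m - 1), ∀ t ∈ Set.Icc (0:ℝ) T, ∀ x : ℝ,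
      τ * pdt (q j) t x + σ₀ * (-1 : ℝ) ^ (j + m - 1) * pdx (q (m - j - 1)) t x
        = σ₀ * (-1 : ℝ) ^ (j + m - 1) * q (m - j) t x)
    (heqb₀ : ∀ t ∈ Set.Icc (0:ℝ) T, ∀ x : ℝ,
      pdt (qb 0) t x + pdx (fun s y => f (qb 0 s y)) t x
        + σ₀ * pdx (qb (m - 1)) t x = τ * R t x)
    (heqblow : ∀ j ∈ Finset.Icc 1 (m / 2 - 1), ∀ t ∈ Set.Icc (0:ℝ) T, ∀ x : ℝ,
      τ * pdt (qb j) t x + σ₀ * (-1 : ℝ) ^ j * pdx (qb (m - j - 1)) t x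
        = σ₀ * (-1 : ℝ) ^ j * qb (m - j) t x)
    (heqbhigh : ∀ j ∈ Finset.Icc (m / 2) (m - 1), ∀ t ∈ Set.Icc (0:ℝ) T, ∀ x : ℝ,
      τ * pdt (qb j) t x + σ₀ * (-1 : ℝ) ^ (j + m - 1) * pdx (qb (m - j - 1)) t x
        = σ₀ * (-1 : ℝ) ^ (j + m - 1) * qb (m - j) t x) :
    ∀ t ∈ Set.Icc (0:ℝ) T, ∃ d : ℝ,
      HasDerivWithinAt
        (fun s => ∫ x in (0:ℝ)..L,
          ((q 0 s x - qb 0 s x) ^ 2 / 2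
            + τ / 2 * ∑ j ∈ Finset.Icc 1 (m - 1), (q j s x - qb j s x) ^ 2))
        d (Set.Icc (0:ℝ) T) t ∧
      d + (∫ x in (0:ℝ)..L, (q (m / 2) t x - qb (m / 2) t x) ^ 2)
        ≤ (Mf * B + 1) *
            (∫ x in (0:ℝ)..L,
              ((q 0 t x - qb 0 t x) ^ 2 / 2
                + τ / 2 * ∑ j ∈ Finset.Icc 1 (m - 1), (q j t x - qb j t x) ^ 2))
          + τ ^ 2 * ∫ x in (0:ℝ)..L, R t x ^ 2 := by
  intro t ht
  obtain ⟨n, rfl⟩ : ∃ n, m = 2 * n := by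
    obtain ⟨n, rfl⟩ := hm
    exact ⟨n, by ring⟩
  have hdiv : 2 * n / 2 = n := by omega
  rw [hdiv] at hσ heqlow heqhigh heqblow heqbhigh ⊢
  set e : ℝ → ℝ → ℝ := fun s x => (q 0 s x - qb 0 s x) ^ 2 / 2
    + τ / 2 * ∑ j ∈ Finset.Icc 1 (2 * n - 1), (q j s x - qb j s x) ^ 2 with he
  have hidx : ∀ j ∈ Finset.Icc 1 (2 * n - 1), j < 2 * n := fun j hj => by
    have := Finset.mem_Icc.1 hj
    omega
  have h0 : 0 < 2 * n := by omega
  have heC : ContDiff ℝ 1 (Function.uncurry e) := by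
    have hsum : ContDiff ℝ 1 (fun p : ℝ × ℝ => ∑ j ∈ Finset.Icc 1 (2 * n - 1),
        (Function.uncurry (q j) p - Function.uncurry (qb j) p) ^ 2) :=
      ContDiff.sum fun j hj => ((hq j (hidx j hj)).sub (hqb j (hidx j hj))).pow 2
    exact ((((hq 0 h0).sub (hqb 0 h0)).pow 2).div_const 2).add (contDiff_const.mul hsum)
  have hslice : ∀ {u : ℝ → ℝ → ℝ}, Continuous (Function.uncurry u) → Continuous (u t) :=
    fun {u} hu => hu.comp (by fun_prop : Continuous fun x : ℝ => (t, x))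
  have hpdt : ∀ x, pdt e t x = (q 0 t x - qb 0 t x) * (pdt (q 0) t x - pdt (qb 0) t x)
      + ∑ j ∈ Finset.Icc 1 (2 * n - 1),
          (q j t x - qb j t x) * (τ * (pdt (q j) t x - pdt (qb j) t x)) := by
    intro x
    have hw : ∀ j < 2 * n, HasDerivAt (fun s => (q j s x - qb j s x) ^ 2)
        (2 * (q j t x - qb j t x) * (pdt (q j) t x - pdt (qb j) t x)) t := fun j hj => by
      simpa using ((hasDerivAt_pdt (hq j hj) t x).fun_sub (hasDerivAt_pdt (hqb j hj) t x)).fun_pow 2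
    have h := ((hw 0 h0).div_const 2).add
      ((HasDerivAt.fun_sum fun j hj => hw j (hidx j hj)).const_mul (τ / 2))
    refine h.deriv.trans ?_
    rw [Finset.mul_sum]
    congr 1
    · ring
    · exact Finset.sum_congr rfl fun j _ => by ring
  refine ⟨∫ x in (0 : ℝ)..L, pdt e t x,
    (hasDerivAt_intervalIntegral_of_contDiff heC 0 L t).hasDerivWithinAt, ?_⟩
  have hfd : ∀ y, HasDerivAt f (deriv f y) y := fun y =>
    (hf.differentiable two_ne_zero y).hasDerivAt
  have hf'c : Continuous (deriv f) := hf.continuous_deriv (by norm_num)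
  have hF : ∀ y, HasDerivAt (fun z => ∫ s in (0 : ℝ)..z, f s) (f y) y := fun y =>
    hf.continuous.integral_hasStrictDerivAt 0 y |>.hasDerivAt
  set F : ℝ → ℝ := fun z => ∫ s in (0 : ℝ)..z, f s
  set Φ : ℝ → ℝ := fun x => (q 0 t x - qb 0 t x) * f (q 0 t x) - F (q 0 t x) + F (qb 0 t x)
    + ∑ j ∈ Finset.range n, (-1 : ℝ) ^ n * (-1) ^ j *
        ((q j t x - qb j t x) * (q (2 * n - 1 - j) t x - qb (2 * n - 1 - j) t x)) with hΦ
  set Φ' : ℝ → ℝ := fun x => (q 0 t x - qb 0 t x) * (deriv f (q 0 t x) * pdx (q 0) t x)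
    - pdx (qb 0) t x * (f (q 0 t x) - f (qb 0 t x))
    + ∑ j ∈ Finset.range n, (-1 : ℝ) ^ n * (-1) ^ j *
        ((q j t x - qb j t x) * (pdx (q (2 * n - 1 - j)) t x - pdx (qb (2 * n - 1 - j)) t x)
          + (pdx (q j) t x - pdx (qb j) t x)
            * (q (2 * n - 1 - j) t x - qb (2 * n - 1 - j) t x)) with hΦ'
  have hΦ'c : Continuous Φ' := by
    have hc : ∀ j < 2 * n, Continuous (fun x => q j t x - qb j t x) := fun j hj =>
      (hslice (hq j hj).continuous).sub (hslice (hqb j hj).continuous)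
    have hcx : ∀ j < 2 * n, Continuous (fun x => pdx (q j) t x - pdx (qb j) t x) :=
      fun j hj => (continuous_pdx_slice (hq j hj) t).sub (continuous_pdx_slice (hqb j hj) t)
    have hq0 := hslice (hq 0 h0).continuous
    have hqb0 := hslice (hqb 0 h0).continuous
    refine ((((hc 0 h0).mul ((hf'c.comp hq0).mul (continuous_pdx_slice (hq 0 h0) t))).sub
      ((continuous_pdx_slice (hqb 0 h0) t).mul
        ((hf.continuous.comp hq0).sub (hf.continuous.comp hqb0))))).add
      (continuous_finsetSum _ fun j hj => ?_)
    have hj' := Finset.mem_range.1 hj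
    have hj1 : j < 2 * n := by omega
    have hj2 : 2 * n - 1 - j < 2 * n := by omega
    exact continuous_const.mul (((hc j hj1).mul (hcx _ hj2)).add ((hcx j hj1).mul (hc _ hj2)))
  have hflux : ∫ x in (0 : ℝ)..L, Φ' x = 0 := by
    refine integral_eq_zero_of_hasDerivAt_periodic (Φ := Φ) (fun x => ?_) hΦ'c fun x => ?_
    · have hqx := hasDerivAt_pdx (hq 0 h0) t x
      have hqbx := hasDerivAt_pdx (hqb 0 h0) t x
      have hw : ∀ j < 2 * n, HasDerivAt (fun y => q j t y - qb j t y)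
          (pdx (q j) t x - pdx (qb j) t x) x := fun j hj =>
        (hasDerivAt_pdx (hq j hj) t x).sub (hasDerivAt_pdx (hqb j hj) t x)
      have hS := HasDerivAt.fun_sum (u := Finset.range n) fun j hj =>
        (((hw j (by have := Finset.mem_range.1 hj; omega)).mul
          (hw (2 * n - 1 - j) (by omega))).const_mul ((-1 : ℝ) ^ n * (-1) ^ j))
      have h := ((((hw 0 h0).mul ((hfd (q 0 t x)).comp x hqx)).sub
        ((hF (q 0 t x)).comp x hqx)).add ((hF (qb 0 t x)).comp x hqbx)).add hS
      refine h.congr_deriv ?_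
      simp only [hΦ', Function.comp_apply]
      congr 1
      · ring
      · exact Finset.sum_congr rfl fun j _ => by ring
    · simp only [hΦ, hper 0 h0 t x, hperb 0 h0 t x]
      congr 1
      refine Finset.sum_congr rfl fun j hj => ?_
      have hj' := Finset.mem_range.1 hj
      rw [hper j (by omega) t x, hperb j (by omega) t x, hper (2 * n - 1 - j) (by omega) t x,
        hperb (2 * n - 1 - j) (by omega) t x]
  have hpoint : ∀ x, pdt e t x + (q n t x - qb n t x) ^ 2 + Φ' x
      ≤ (Mf * B + 1) * e t x + τ ^ 2 * R t x ^ 2 := by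
    intro x
    have hchain : pdx (fun s y => f (q 0 s y)) t x = deriv f (q 0 t x) * pdx (q 0) t x :=
      ((hfd (q 0 t x)).comp x (hasDerivAt_pdx (hq 0 h0) t x)).deriv
    have hchainb : pdx (fun s y => f (qb 0 s y)) t x = deriv f (qb 0 t x) * pdx (qb 0) t x :=
      ((hfd (qb 0 t x)).comp x (hasDerivAt_pdx (hqb 0 h0) t x)).deriv
    have hsum := sum_mul_relaxation_eq n (by omega) (fun j => q j t x - qb j t x)
      (fun j => pdx (q j) t x - pdx (qb j) t x)
      (fun j => τ * (pdt (q j) t x - pdt (qb j) t x))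
      (fun j h1 h2 => by
        have hj : j ∈ Finset.Icc 1 (n - 1) := Finset.mem_Icc.2 ⟨h1, by omega⟩
        have e1 := heqlow j hj t ht x
        have e2 := heqblow j hj t ht x
        rw [show 2 * n - j - 1 = 2 * n - 1 - j by omega, hσ] at e1 e2
        linear_combination e1 - e2)
      (fun j h1 h2 => by
        have hj : j ∈ Finset.Icc n (2 * n - 1) := Finset.mem_Icc.2 ⟨h1, by omega⟩
        have e1 := heqhigh j hj t ht x
        have e2 := heqbhigh j hj t ht x
        have hsgn : (-1 : ℝ) ^ (j + 2 * n - 1) = -(-1) ^ j := by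
          have : j + 2 * n - 1 = j + 2 * (n - 1) + 1 := by omega
          rw [this, pow_succ, pow_add, pow_mul]
          simp
        rw [show 2 * n - j - 1 = 2 * n - 1 - j by omega, hσ, hsgn] at e1 e2
        linear_combination e1 - e2)
    have e1 := heq₀ t ht x
    have e2 := heqb₀ t ht x
    rw [hchain, hσ] at e1
    rw [hchainb, hσ] at e2
    have hid : pdt e t x + (q n t x - qb n t x) ^ 2 + Φ' x
        = -(pdx (qb 0) t x * (f (q 0 t x) - f (qb 0 t x)
            - deriv f (qb 0 t x) * (q 0 t x - qb 0 t x)))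
          - τ * R t x * (q 0 t x - qb 0 t x) := by
      rw [hpdt x, hsum]
      simp only [hΦ']
      linear_combination (q 0 t x - qb 0 t x) * (e1 - e2)
    have htaylor := abs_sub_sub_deriv_mul_le hf hMf (qb 0 t x) (q 0 t x)
    have hB0 : 0 ≤ B := (abs_nonneg _).trans (hB t x)
    have hMf0 : 0 ≤ Mf := (abs_nonneg _).trans (hMf 0)
    have hnl := (neg_le_abs _).trans ((abs_mul _ _).le.trans
      (mul_le_mul (hB t x) htaylor (abs_nonneg _) hB0))
    have hew : (q 0 t x - qb 0 t x) ^ 2 / 2 ≤ e t x :=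
      le_add_of_nonneg_right (mul_nonneg (by positivity)
        (Finset.sum_nonneg fun j _ => sq_nonneg _))
    have hscale := mul_le_mul_of_nonneg_left hew
      (add_nonneg (mul_nonneg hMf0 hB0) zero_le_one)
    rw [hid]
    nlinarith [sq_nonneg (τ * R t x + (q 0 t x - qb 0 t x)), sq_nonneg (τ * R t x)]
  have hn : n < 2 * n := by omega
  have hpdti : IntervalIntegrable (pdt e t) volume 0 L :=
    (hslice (continuous_pdt heC)).intervalIntegrable 0 L
  have hwi : IntervalIntegrable (fun x => (q n t x - qb n t x) ^ 2) volume 0 L :=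
    (((hslice (hq n hn).continuous).sub (hslice (hqb n hn).continuous)).pow 2).intervalIntegrable
      0 L
  have hΦ'i : IntervalIntegrable Φ' volume 0 L := hΦ'c.intervalIntegrable 0 L
  have hei : IntervalIntegrable (e t) volume 0 L :=
    (hslice heC.continuous).intervalIntegrable 0 L
  have hRi : IntervalIntegrable (fun x => R t x ^ 2) volume 0 L :=
    ((hslice hR).pow 2).intervalIntegrable 0 L
  have hmono := intervalIntegral.integral_mono_on hL.le ((hpdti.add hwi).add hΦ'i)
    ((hei.const_mul (Mf * B + 1)).add (hRi.const_mul (τ ^ 2))) fun x _ => hpoint x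
  rw [intervalIntegral.integral_add (hpdti.add hwi) hΦ'i, intervalIntegral.integral_add hpdti hwi,
    intervalIntegral.integral_add (hei.const_mul _) (hRi.const_mul _),
    intervalIntegral.integral_const_mul, intervalIntegral.integral_const_mul, hflux,
    add_zero] at hmono
  exact hmono
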